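/- arXiv:2510.22757 — 3 statements merged into one kernel-verified Lean document; each statement's English description precedes it below -/
import Mathlib

section
/- Let Θ be a nonempty type, F, J : Θ → ℝ, ε ≥ 0, J̄ ≥ 0, η > 0, μ₁ ≥ 0 and K ≥ 1. Let μ₁, …, μ_{K+1} ∈ ℝ and θ₁, …, θ_K ∈ Θ satisfy: for each k, θₖ maximizes the Lagrangian with multiplier μₖ (i.e. F(θ) + μₖ(ε − J(θ)) ≤ F(θₖ) + μₖ(ε − J(θₖ)) for all θ), 0 ≤ J(θₖ) ≤ J̄, and μₖ₊₁ = max(μₖ − η(ε − J(θₖ)), 0). Let θ* ∈ Θ satisfy J(θ*) ≤ ε. Then (1/K)·Σ_{k=1}^{K} (F(θ*) − F(θₖ)) ≤ η·(max{ε, J̄})² + μ₁²/(2Kη). -/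
/-!
Feasibility of `θstar` and maximality of `θ k` bound each gap `F θstar - F (θ k)` by `μ k * g k`,
where `g k = ε - J (θ k)` is the slack. The multipliers are projected gradient descent iterates for
the linear losses `x ↦ x * g k` on `[0, ∞)`, so `∑ μ k * g k` is their regret against the comparator
`0`. It is controlled by the potential `μ k ^ 2`: as the projection is nonexpansive,
`μ (k + 1) ^ 2 ≤ (μ k - η * g k) ^ 2`, and expanding the square and telescoping bounds the regret.
-/

open Finset

section DualStep

variable {R : Type*} [CommRing R] [LinearOrder R]

/-- One step of projected gradient descent on `[0, ∞)` from `x`, with step size `η` and gradient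
`g`. For the dual problem, `x` is the multiplier and `g` is the constraint slack. -/
def dualStep (η g x : R) : R := max (x - η * g) 0

theorem dualStep_nonneg (η g x : R) : 0 ≤ dualStep η g x := le_max_right _ _

variable {η u : R} {m n : ℕ} {x g : ℕ → R}

theorem nonneg_of_dualStep (hm : 0 ≤ x m)
    (hx : ∀ k ∈ Ico m n, x (k + 1) = dualStep η (g k) (x k)) {k : ℕ} (hk : k ∈ Icc m n) :
    0 ≤ x k := by
  obtain ⟨hmk, hkn⟩ := mem_Icc.1 hk
  obtain rfl | hlt := hmk.eq_or_lt
  · exact hm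
  · obtain ⟨j, rfl⟩ := Nat.exists_eq_add_one_of_ne_zero (Nat.ne_zero_of_lt hlt)
    rw [hx j (mem_Ico.2 ⟨Nat.le_of_lt_succ hlt, hkn⟩)]
    exact dualStep_nonneg _ _ _

variable [IsStrictOrderedRing R]

theorem sq_dualStep_sub_le (hu : 0 ≤ u) (η g x : R) :
    (dualStep η g x - u) ^ 2 ≤ (x - η * g - u) ^ 2 := by
  have nonexpansive := abs_max_sub_max_le_abs (x - η * g) u 0
  rw [max_eq_left hu] at nonexpansive
  exact sq_le_sq.2 nonexpansive

theorem two_mul_regret_le_of_dualStep (hu : 0 ≤ u) (η g x : R) :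
    2 * η * ((x - u) * g) ≤ (x - u) ^ 2 - (dualStep η g x - u) ^ 2 + η ^ 2 * g ^ 2 := by
  linarith [sq_dualStep_sub_le hu η g x]

theorem two_mul_sum_regret_le_of_dualStep (hmn : m ≤ n) (hu : 0 ≤ u)
    (hx : ∀ k ∈ Ico m n, x (k + 1) = dualStep η (g k) (x k)) :
    2 * η * ∑ k ∈ Ico m n, (x k - u) * g k ≤
      (x m - u) ^ 2 + η ^ 2 * ∑ k ∈ Ico m n, g k ^ 2 := by
  have telescope : ∑ k ∈ Ico m n, ((x k - u) ^ 2 - (x (k + 1) - u) ^ 2) =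
      (x m - u) ^ 2 - (x n - u) ^ 2 := by
    simpa only [neg_sub_neg] using sum_Ico_sub (fun k ↦ -(x k - u) ^ 2) hmn
  calc 2 * η * ∑ k ∈ Ico m n, (x k - u) * g k
      ≤ ∑ k ∈ Ico m n, ((x k - u) ^ 2 - (x (k + 1) - u) ^ 2 + η ^ 2 * g k ^ 2) := by
        rw [mul_sum]
        gcongr with k hk
        rw [hx k hk]
        exact two_mul_regret_le_of_dualStep hu η (g k) (x k)
    _ = (x m - u) ^ 2 - (x n - u) ^ 2 + η ^ 2 * ∑ k ∈ Ico m n, g k ^ 2 := by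
        rw [sum_add_distrib, telescope, mul_sum]
    _ ≤ (x m - u) ^ 2 + η ^ 2 * ∑ k ∈ Ico m n, g k ^ 2 := by
        linarith [sq_nonneg (x n - u)]

end DualStep

section Lagrangian

variable {Θ R : Type*} [CommRing R]

/-- The Lagrangian, with multiplier `μ`, of maximizing `F` subject to `J ≤ ε`. -/
def lagrangian (F J : Θ → R) (ε μ : R) (θ : Θ) : R := F θ + μ * (ε - J θ)

theorem objective_gap_le_mul_slack [LinearOrder R] [IsStrictOrderedRing R] {F J : Θ → R} {ε μ : R}
    {θ θ' : Θ} (hμ : 0 ≤ μ) (hfeas : J θ' ≤ ε)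
    (hle : lagrangian F J ε μ θ' ≤ lagrangian F J ε μ θ) :
    F θ' - F θ ≤ μ * (ε - J θ) := by
  have penalty_nonneg : 0 ≤ μ * (ε - J θ') := mul_nonneg hμ (sub_nonneg.2 hfeas)
  unfold lagrangian at hle
  linarith

end Lagrangian

section DualDescent

variable {Θ R : Type*} [CommRing R] [LinearOrder R] [IsStrictOrderedRing R]
  {F J : Θ → R} {ε η G : R} {μ : ℕ → R} {θ : ℕ → Θ} {θstar : Θ} {K : ℕ}

theorem sum_objective_gap_le_sum_mul_slack (hμ1 : 0 ≤ μ 1)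
    (hle : ∀ k ∈ Icc 1 K, lagrangian F J ε (μ k) θstar ≤ lagrangian F J ε (μ k) (θ k))
    (hupd : ∀ k ∈ Icc 1 K, μ (k + 1) = dualStep η (ε - J (θ k)) (μ k)) (hfeas : J θstar ≤ ε) :
    ∑ k ∈ Icc 1 K, (F θstar - F (θ k)) ≤ ∑ k ∈ Icc 1 K, μ k * (ε - J (θ k)) := by
  refine sum_le_sum fun k hk ↦ objective_gap_le_mul_slack ?_ hfeas (hle k hk)
  exact nonneg_of_dualStep (g := fun k ↦ ε - J (θ k)) hμ1
    (fun j hj ↦ hupd j (Ico_subset_Icc_self hj)) hk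

theorem two_mul_sum_mul_slack_le (hG : ∀ k ∈ Icc 1 K, |ε - J (θ k)| ≤ G)
    (hupd : ∀ k ∈ Icc 1 K, μ (k + 1) = dualStep η (ε - J (θ k)) (μ k)) :
    2 * η * ∑ k ∈ Icc 1 K, μ k * (ε - J (θ k)) ≤ μ 1 ^ 2 + η ^ 2 * (K * G ^ 2) := by
  have regret : 2 * η * ∑ k ∈ Icc 1 K, μ k * (ε - J (θ k)) ≤
      μ 1 ^ 2 + η ^ 2 * ∑ k ∈ Icc 1 K, (ε - J (θ k)) ^ 2 := by
    rw [← Ico_add_one_right_eq_Icc] at hupd ⊢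
    simpa only [sub_zero] using
      two_mul_sum_regret_le_of_dualStep (Nat.le_add_left 1 K) le_rfl hupd
  have sum_sq_slack_le : ∑ k ∈ Icc 1 K, (ε - J (θ k)) ^ 2 ≤ K * G ^ 2 := by
    simpa using sum_le_card_nsmul _ _ _ fun k hk ↦ sq_le_sq.2 ((hG k hk).trans (le_abs_self G))
  exact regret.trans (by gcongr)

end DualDescent

theorem dual_descent_objective_gap_general
    {Θ 𝕜 : Type*} [Field 𝕜] [LinearOrder 𝕜] [IsStrictOrderedRing 𝕜]
    {F J : Θ → 𝕜} {ε η G : 𝕜} {μ : ℕ → 𝕜} {θ : ℕ → Θ} {θstar : Θ} {K : ℕ}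
    (hη : 0 < η) (hK : 1 ≤ K) (hμ1 : 0 ≤ μ 1)
    (hle : ∀ k ∈ Icc 1 K, lagrangian F J ε (μ k) θstar ≤ lagrangian F J ε (μ k) (θ k))
    (hG : ∀ k ∈ Icc 1 K, |ε - J (θ k)| ≤ G)
    (hupd : ∀ k ∈ Icc 1 K, μ (k + 1) = dualStep η (ε - J (θ k)) (μ k)) (hfeas : J θstar ≤ ε) :
    (1 / (K : 𝕜)) * ∑ k ∈ Icc 1 K, (F θstar - F (θ k)) ≤
      η / 2 * G ^ 2 + μ 1 ^ 2 / (2 * K * η) := by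
  have : (0 : 𝕜) < K := by exact_mod_cast hK
  calc (1 / (K : 𝕜)) * ∑ k ∈ Icc 1 K, (F θstar - F (θ k))
      ≤ (1 / (K : 𝕜)) * ∑ k ∈ Icc 1 K, μ k * (ε - J (θ k)) := by
        gcongr ?_ * ?_
        exact sum_objective_gap_le_sum_mul_slack hμ1 hle hupd hfeas
    _ = (2 * η * ∑ k ∈ Icc 1 K, μ k * (ε - J (θ k))) / (2 * K * η) := by field_simp
    _ ≤ (μ 1 ^ 2 + η ^ 2 * (K * G ^ 2)) / (2 * K * η) := by
        gcongr
        exact two_mul_sum_mul_slack_le hG hupd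
    _ = η / 2 * G ^ 2 + μ 1 ^ 2 / (2 * K * η) := by
        field_simp
        ring

theorem dual_descent_objective_gap
    {Θ : Type*} [Nonempty Θ] (F J : Θ → ℝ) (ε Jbar η : ℝ)
    (hε : 0 ≤ ε) (hJbar : 0 ≤ Jbar) (hη : 0 < η)
    (K : ℕ) (hK : 1 ≤ K)
    (μ : ℕ → ℝ) (θ : ℕ → Θ) (hμ1 : 0 ≤ μ 1)
    (hmax : ∀ k, 1 ≤ k → k ≤ K → ∀ θ' : Θ,
      F θ' + μ k * (ε - J θ') ≤ F (θ k) + μ k * (ε - J (θ k)))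
    (hJθ : ∀ k, 1 ≤ k → k ≤ K → 0 ≤ J (θ k) ∧ J (θ k) ≤ Jbar)
    (hupd : ∀ k, 1 ≤ k → k ≤ K → μ (k + 1) = max (μ k - η * (ε - J (θ k))) 0)
    (θstar : Θ) (hfeas : J θstar ≤ ε) :
    (1 / (K : ℝ)) * ∑ k ∈ Finset.Icc 1 K, (F θstar - F (θ k)) ≤
      η * (max ε Jbar) ^ 2 + (μ 1) ^ 2 / (2 * K * η) := by
  have slack_le : ∀ k ∈ Icc 1 K, |ε - J (θ k)| ≤ max ε Jbar := fun k hk ↦ by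
    obtain ⟨hJ_nonneg, hJ_le⟩ := hJθ k (mem_Icc.1 hk).1 (mem_Icc.1 hk).2
    exact abs_sub_le_of_nonneg_of_le hε (le_max_left _ _) hJ_nonneg (le_max_of_le_right hJ_le)
  have gap_le := dual_descent_objective_gap_general hη hK hμ1
    (fun k hk ↦ hmax k (mem_Icc.1 hk).1 (mem_Icc.1 hk).2 θstar) slack_le
    (fun k hk ↦ hupd k (mem_Icc.1 hk).1 (mem_Icc.1 hk).2) hfeas
  exact gap_le.trans (by gcongr; exact half_le_self hη.le)
end

section
/- (One-step Moreau envelope descent.) Let E be a real inner product space, φ : E → ℝ bounded below, β > 0, λ > 0, w, g ∈ E and w⁺ = w − λg. Let ŵ be a proximal point of φ at w with parameter β, and let Φ denote the Moreau-type envelope Φ(u) = inf_{w'} (φ(w') + β‖w' − u‖²). Suppose that for some D ∈ ℝ, φ(ŵ) ≥ φ(w) − D + ⟨g, ŵ − w⟩ − (β/2)‖ŵ − w‖². Then Φ(w⁺) ≤ Φ(w) + 2βλ·(φ(ŵ) − φ(w) + D + (β/2)‖ŵ − w‖²) + λ²β‖g‖². -/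
open scoped RealInnerProductSpace

/-!
The proximal point `ŵ` at `w` is a competitor in the infimum defining the envelope at `w - t • g`.
Moving the centre from `w` to `w - t • g` changes the objective at `ŵ` by
`2βt⟪g, ŵ - w⟫ + t²β‖g‖²`, and the lower bound on `φ ŵ` controls the inner product.
-/

section Envelope

variable {E : Type*} [SeminormedAddCommGroup E] {φ : E → ℝ} {β : ℝ}

/-- The objective `x ↦ φ x + β‖x - u‖²`, whose minimizers are the proximal points of `φ` at `u`
with parameter `β`. The quadratic term carries the factor `β`, not `β / 2`. -/
def proxObjective (φ : E → ℝ) (β : ℝ) (u x : E) : ℝ :=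
  φ x + β * ‖x - u‖ ^ 2

/-- The Moreau-type envelope of `φ` with parameter `β`: the infimum of the proximal objective. It
takes the junk value `0` at centres where that objective is not bounded below. -/
noncomputable def moreauEnvelope (φ : E → ℝ) (β : ℝ) (u : E) : ℝ :=
  ⨅ x, proxObjective φ β u x

theorem bddBelow_range_proxObjective (hφ : BddBelow (Set.range φ)) (hβ : 0 ≤ β) (u : E) :
    BddBelow (Set.range (proxObjective φ β u)) :=
  hφ.range_mono _ fun _ ↦ le_add_of_nonneg_right (by positivity)

theorem moreauEnvelope_eq_of_isMinOn {w p : E} (hp : IsMinOn (proxObjective φ β w) Set.univ p) :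
    moreauEnvelope φ β w = proxObjective φ β w p :=
  IsLeast.csInf_eq ⟨Set.mem_range_self p, Set.forall_mem_range.2 (isMinOn_univ_iff.1 hp)⟩

end Envelope

section Descent

variable {E : Type*} [SeminormedAddCommGroup E] [InnerProductSpace ℝ E] {φ : E → ℝ} {β t : ℝ}
  {w g p : E}

theorem proxObjective_sub_smul (φ : E → ℝ) (β t : ℝ) (w g x : E) :
    proxObjective φ β (w - t • g) x =
      proxObjective φ β w x + 2 * β * t * ⟪g, x - w⟫ + t ^ 2 * β * ‖g‖ ^ 2 := by
  have norm_sq_shift :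
      ‖x - (w - t • g)‖ ^ 2 = ‖x - w‖ ^ 2 + 2 * t * ⟪g, x - w⟫ + t ^ 2 * ‖g‖ ^ 2 := by
    rw [← sub_add, norm_add_sq_real, real_inner_smul_right, real_inner_comm, norm_smul, mul_pow,
      Real.norm_eq_abs, sq_abs]
    ring
  rw [proxObjective, proxObjective, norm_sq_shift]
  ring

theorem moreauEnvelope_sub_smul_le
    (hbdd : BddBelow (Set.range (proxObjective φ β (w - t • g))))
    (hp : IsMinOn (proxObjective φ β w) Set.univ p) :
    moreauEnvelope φ β (w - t • g) ≤
      moreauEnvelope φ β w + 2 * β * t * ⟪g, p - w⟫ + t ^ 2 * β * ‖g‖ ^ 2 :=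
  calc
    moreauEnvelope φ β (w - t • g) ≤ proxObjective φ β (w - t • g) p := ciInf_le hbdd p
    _ = moreauEnvelope φ β w + 2 * β * t * ⟪g, p - w⟫ + t ^ 2 * β * ‖g‖ ^ 2 := by
      rw [proxObjective_sub_smul, moreauEnvelope_eq_of_isMinOn hp]

theorem moreau_envelope_one_step_descent_general {D : ℝ} (hβ : 0 ≤ β) (ht : 0 ≤ t)
    (hbdd : BddBelow (Set.range (proxObjective φ β (w - t • g))))
    (hp : IsMinOn (proxObjective φ β w) Set.univ p)
    (hlower : φ w - D + ⟪g, p - w⟫ - (β / 2) * ‖p - w‖ ^ 2 ≤ φ p) :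
    moreauEnvelope φ β (w - t • g) ≤
      moreauEnvelope φ β w + 2 * β * t * (φ p - φ w + D + (β / 2) * ‖p - w‖ ^ 2)
        + t ^ 2 * β * ‖g‖ ^ 2 := by
  have inner_le : ⟪g, p - w⟫ ≤ φ p - φ w + D + (β / 2) * ‖p - w‖ ^ 2 := by linarith
  refine (moreauEnvelope_sub_smul_le hbdd hp).trans ?_
  gcongr

end Descent

theorem moreau_envelope_one_step_descent
    {E : Type*} [NormedAddCommGroup E] [InnerProductSpace ℝ E]
    (φ : E → ℝ) (m : ℝ) (hbdd : ∀ w' : E, m ≤ φ w')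
    (β lam : ℝ) (hβ : 0 < β) (hlam : 0 < lam)
    (w g : E) (wplus : E) (hwplus : wplus = w - lam • g)
    (what : E)
    (hprox : ∀ w' : E, φ what + β * ‖what - w‖ ^ 2 ≤ φ w' + β * ‖w' - w‖ ^ 2)
    (Φ : E → ℝ) (hΦ : ∀ u : E, Φ u = ⨅ w' : E, (φ w' + β * ‖w' - u‖ ^ 2))
    (D : ℝ)
    (hlower : φ w - D + ⟪g, what - w⟫ - (β / 2) * ‖what - w‖ ^ 2 ≤ φ what) :
    Φ wplus ≤ Φ w + 2 * β * lam * (φ what - φ w + D + (β / 2) * ‖what - w‖ ^ 2)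
      + lam ^ 2 * β * ‖g‖ ^ 2 := by
  obtain rfl : Φ = moreauEnvelope φ β := funext hΦ
  subst hwplus
  exact moreau_envelope_one_step_descent_general hβ.le hlam.le
    (bddBelow_range_proxObjective ⟨m, Set.forall_mem_range.2 hbdd⟩ hβ.le _)
    (isMinOn_univ_iff.2 hprox) hlower
end

section
/- (Chain rule for KL divergence.) Let X and Y be standard Borel measurable spaces, let p and q be probability measures on X, and let κ, η be Markov kernels from X to Y. Then D_KL(p ⊗ κ ‖ q ⊗ η) = D_KL(p ‖ q) + ∫ D_KL(κ(x) ‖ η(x)) dp(x), where p ⊗ κ denotes the measure on X × Y obtained by composing p with the kernel κ, and the identity is understood in [0, ∞]. -/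
open MeasureTheory ProbabilityTheory
open scoped ENNReal

/-- The Kullback–Leibler divergence `D_KL(μ ‖ ν)`, with values in `[0, ∞]`:
it equals `∫ log (dμ/dν) dμ` when `μ ≪ ν` (and this integral exists), and `∞` otherwise. -/
noncomputable def klDiv {X : Type*} [MeasurableSpace X] (μ ν : Measure X) : ℝ≥0∞ :=
  haveI := Classical.propDecidable
  if _h : μ ≪ ν ∧ Integrable (llr μ ν) μ then ENNReal.ofReal (∫ x, llr μ ν x ∂μ) else ⊤

/-!
The chain rule `∂(p ⊗ₘ κ)/∂(q ⊗ₘ η) = ∂p/∂q * ∂(p ⊗ₘ κ)/∂(p ⊗ₘ η)` for Radon–Nikodym derivatives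
splits the divergence into `D(p ‖ q) + D(p ⊗ₘ κ ‖ p ⊗ₘ η)`; this is
`InformationTheory.klDiv_compProd_eq_add`. It remains to disintegrate the second term over `p`.
The density of `p ⊗ₘ κ` with respect to `p ⊗ₘ η` is the jointly measurable kernel derivative
`∂κ/∂η`, whose section at `x` is `∂(κ x)/∂(η x)`. As the divergence is also the integral over the
second measure of the nonnegative function `klFun t = t * log t + 1 - t` of the density, Tonelli's
theorem applies with no integrability assumption.
-/

section CompProd

open InformationTheory (klFun)

variable {X Y : Type*} {mX : MeasurableSpace X} {mY : MeasurableSpace Y}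
  [MeasurableSpace.CountableOrCountablyGenerated X Y] (κ η : Kernel X Y)

lemma measurable_ofReal_klFun_rnDeriv :
    Measurable fun z : X × Y ↦ ENNReal.ofReal (klFun (κ.rnDeriv η z.1 z.2).toReal) :=
  (InformationTheory.measurable_klFun.comp (κ.measurable_rnDeriv η).ennreal_toReal).ennreal_ofReal

variable [IsFiniteKernel κ] [IsFiniteKernel η]

lemma rnDeriv_measure_compProd_right (p : Measure X) [SFinite p] [SigmaFinite (p ⊗ₘ η)] :
    (p ⊗ₘ κ).rnDeriv (p ⊗ₘ η) =ᵐ[p ⊗ₘ η] fun z ↦ κ.rnDeriv η z.1 z.2 := by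
  have lebesgue_decomposition : p ⊗ₘ κ =
      p ⊗ₘ κ.singularPart η + (p ⊗ₘ η).withDensity fun z ↦ κ.rnDeriv η z.1 z.2 := by
    rw [← Measure.compProd_withDensity (κ.measurable_rnDeriv η), ← Measure.compProd_add_right,
      add_comm, κ.rnDeriv_add_singularPart η]
  have singular : p ⊗ₘ κ.singularPart η ⟂ₘ p ⊗ₘ η :=
    .compProd_of_right p p (.of_forall (κ.mutuallySingular_singularPart η))
  exact (Measure.eq_rnDeriv (κ.measurable_rnDeriv η) singular lebesgue_decomposition).symm

lemma klDiv_kernel_eq_lintegral_klFun_of_ac {x : X} (hx : κ x ≪ η x) :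
    InformationTheory.klDiv (κ x) (η x) =
      ∫⁻ y, .ofReal (klFun (κ.rnDeriv η x y).toReal) ∂(η x) := by
  rw [InformationTheory.klDiv_eq_lintegral_klFun_of_ac hx]
  refine lintegral_congr_ae ?_
  filter_upwards [κ.rnDeriv_eq_rnDeriv_measure (η := η) (a := x)] with y hy
  rw [hy]

lemma measurable_klDiv_kernel : Measurable fun x ↦ InformationTheory.klDiv (κ x) (η x) := by
  classical
  have klDiv_eq_ite (x : X) : InformationTheory.klDiv (κ x) (η x) = if κ x ≪ η x then
      ∫⁻ y, .ofReal (klFun (κ.rnDeriv η x y).toReal) ∂(η x) else ∞ := by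
    split_ifs with hx
    · exact klDiv_kernel_eq_lintegral_klFun_of_ac κ η hx
    · exact InformationTheory.klDiv_of_not_ac hx
  simp_rw [klDiv_eq_ite]
  exact .ite (κ.measurableSet_absolutelyContinuous η)
    (measurable_ofReal_klFun_rnDeriv κ η).lintegral_kernel_prod_right' measurable_const

variable (p : Measure X)

lemma klDiv_compProd_right_of_ac [IsFiniteMeasure p] (h_ac : ∀ᵐ x ∂p, κ x ≪ η x) :
    InformationTheory.klDiv (p ⊗ₘ κ) (p ⊗ₘ η) =
      ∫⁻ x, InformationTheory.klDiv (κ x) (η x) ∂p :=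
  calc InformationTheory.klDiv (p ⊗ₘ κ) (p ⊗ₘ η)
  _ = ∫⁻ z, .ofReal (klFun ((p ⊗ₘ κ).rnDeriv (p ⊗ₘ η) z).toReal) ∂(p ⊗ₘ η) :=
    InformationTheory.klDiv_eq_lintegral_klFun_of_ac
      (Measure.absolutelyContinuous_compProd_right_iff.mpr h_ac)
  _ = ∫⁻ z, .ofReal (klFun (κ.rnDeriv η z.1 z.2).toReal) ∂(p ⊗ₘ η) := by
    refine lintegral_congr_ae ?_
    filter_upwards [rnDeriv_measure_compProd_right κ η p] with z hz
    rw [hz]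
  _ = ∫⁻ x, ∫⁻ y, .ofReal (klFun (κ.rnDeriv η x y).toReal) ∂(η x) ∂p :=
    Measure.lintegral_compProd (measurable_ofReal_klFun_rnDeriv κ η)
  _ = ∫⁻ x, InformationTheory.klDiv (κ x) (η x) ∂p := by
    refine lintegral_congr_ae ?_
    filter_upwards [h_ac] with x hx
    exact (klDiv_kernel_eq_lintegral_klFun_of_ac κ η hx).symm

lemma ae_ac_of_lintegral_klDiv_ne_top (h : ∫⁻ x, InformationTheory.klDiv (κ x) (η x) ∂p ≠ ∞) :
    ∀ᵐ x ∂p, κ x ≪ η x := by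
  filter_upwards [ae_lt_top (measurable_klDiv_kernel κ η) h] with x hx
  exact (InformationTheory.klDiv_ne_top_iff.mp hx.ne).1

lemma klDiv_compProd_right [IsFiniteMeasure p] :
    InformationTheory.klDiv (p ⊗ₘ κ) (p ⊗ₘ η) =
      ∫⁻ x, InformationTheory.klDiv (κ x) (η x) ∂p := by
  by_cases h_ac : ∀ᵐ x ∂p, κ x ≪ η x
  · exact klDiv_compProd_right_of_ac κ η p h_ac
  · have lintegral_eq_top : ∫⁻ x, InformationTheory.klDiv (κ x) (η x) ∂p = ∞ :=
      not_not.mp (mt (ae_ac_of_lintegral_klDiv_ne_top κ η p) h_ac)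
    rw [lintegral_eq_top, InformationTheory.klDiv_of_not_ac
      (mt Measure.absolutelyContinuous_compProd_right_iff.mp h_ac)]

end CompProd

/-- `InformationTheory.klDiv` adds the correction `ν.real univ - μ.real univ` to the integral. -/
lemma klDiv_eq_informationTheory_klDiv {X : Type*} [MeasurableSpace X] {μ ν : Measure X}
    (h_mass : μ .univ = ν .univ) : klDiv μ ν = InformationTheory.klDiv μ ν := by
  by_cases h : μ ≪ ν ∧ Integrable (llr μ ν) μ
  · rw [klDiv, dif_pos h, InformationTheory.klDiv_of_ac_of_integrable h.1 h.2, measureReal_def,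
      measureReal_def, h_mass, add_sub_cancel_right]
  · rw [klDiv, dif_neg h, not_not.mp (mt InformationTheory.klDiv_ne_top_iff.mp h)]

theorem klDiv_chain_rule_general {X Y : Type*} [MeasurableSpace X] [MeasurableSpace Y]
    [MeasurableSpace.CountableOrCountablyGenerated X Y]
    (p q : Measure X) [IsFiniteMeasure p] [IsFiniteMeasure q] (h_mass : p .univ = q .univ)
    (κ η : Kernel X Y) [IsMarkovKernel κ] [IsMarkovKernel η] :
    klDiv (p ⊗ₘ κ) (q ⊗ₘ η) = klDiv p q + ∫⁻ x, klDiv (κ x) (η x) ∂p := by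
  have compProd_mass : (p ⊗ₘ κ) .univ = (q ⊗ₘ η) .univ := by
    rw [Measure.compProd_apply_univ, Measure.compProd_apply_univ, h_mass]
  have kernel_mass (x : X) : κ x .univ = η x .univ := by
    rw [measure_univ, measure_univ]
  simp_rw [klDiv_eq_informationTheory_klDiv compProd_mass, klDiv_eq_informationTheory_klDiv h_mass,
    klDiv_eq_informationTheory_klDiv (kernel_mass _)]
  rw [InformationTheory.klDiv_compProd_eq_add, klDiv_compProd_right]

theorem klDiv_chain_rule
    {X Y : Type*} [MeasurableSpace X] [StandardBorelSpace X]
    [MeasurableSpace Y] [StandardBorelSpace Y]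
    (p q : Measure X) [IsProbabilityMeasure p] [IsProbabilityMeasure q]
    (κ η : ProbabilityTheory.Kernel X Y) [IsMarkovKernel κ] [IsMarkovKernel η] :
    klDiv (p ⊗ₘ κ) (q ⊗ₘ η) = klDiv p q + ∫⁻ x, klDiv (κ x) (η x) ∂p :=
  klDiv_chain_rule_general p q (by rw [measure_univ, measure_univ]) κ η
end
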